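/- arXiv:2207.04665 — 9 statements merged into one kernel-verified Lean document; each statement's English description precedes it below -/
import Mathlib

section
/- Let μ be an infinite cardinal. Assume the Chang's conjecture variant (μ⁺⁺, μ⁺) ↠_μ (μ⁺, μ) holds in the following combinatorial form: for every function g from the set of finite sequences of ordinals below μ⁺⁺ to the ordinals below μ⁺⁺ there is a set X of ordinals below μ⁺⁺ such that |X| = μ⁺, X is closed under g, |X ∩ μ⁺| = μ, and every ordinal below μ belongs to X. Then for every natural number n the polarized partition relation (μ⁺⁺, μ⁺) → (n, μ⁺)_μ holds: for every function f : μ⁺⁺ × μ⁺ → μ there exist H₀ ⊆ μ⁺⁺ with |H₀| = n and H₁ ⊆ μ⁺ with |H₁| = μ⁺ such that f takes at most one value on H₀ × H₁. -/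
open Cardinal Set

lemma bdd_of_small {κ : Cardinal.{0}} (hκ : κ.IsRegular) (T : Set Ordinal.{0})
    (hT : T ⊆ Set.Iio κ.ord) (hc : #T < Cardinal.lift.{1} κ) :
    ∃ γ < κ.ord, ∀ β ∈ T, β ≤ γ := by
  refine ⟨sSup T, Ordinal.sSup_lt_of_lt_cof ?_ (fun i hi => hT hi), fun β hβ =>
    le_csSup ⟨κ.ord, fun i hi => (hT hi).le⟩ hβ⟩
  rw [← Ordinal.lift_cof, hκ.cof_ord]
  exact hc

/-- If the Chang's conjecture variant `(μ⁺⁺, μ⁺) ↠_μ (μ⁺, μ)` holds (in its combinatorial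
form in terms of closure under functions on finite sequences), then for every `n < ω` the
polarized partition relation `(μ⁺⁺, μ⁺) → (n, μ⁺)_μ` holds. -/
theorem changsConjecture_implies_polarized_partition
    (μ : Cardinal.{0}) (hμ : ℵ₀ ≤ μ)
    (hCC : ∀ g : List Ordinal.{0} → Ordinal.{0},
      (∀ l : List Ordinal, (∀ a ∈ l, a < (Order.succ (Order.succ μ)).ord) →
        g l < (Order.succ (Order.succ μ)).ord) →
      ∃ X : Set Ordinal, X ⊆ Set.Iio (Order.succ (Order.succ μ)).ord ∧
        #X = Cardinal.lift.{1} (Order.succ μ) ∧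
        (∀ l : List Ordinal, (∀ a ∈ l, a ∈ X) → g l ∈ X) ∧
        #(↥(X ∩ Set.Iio (Order.succ μ).ord)) = Cardinal.lift.{1} μ ∧
        (∀ α : Ordinal, α < μ.ord → α ∈ X)) :
    ∀ n : ℕ, ∀ f : Ordinal → Ordinal → Ordinal,
      (∀ α < (Order.succ (Order.succ μ)).ord, ∀ β < (Order.succ μ).ord, f α β < μ.ord) →
      ∃ H₀ H₁ : Set Ordinal,
        H₀ ⊆ Set.Iio (Order.succ (Order.succ μ)).ord ∧ #H₀ = (n : Cardinal) ∧
        H₁ ⊆ Set.Iio (Order.succ μ).ord ∧ #H₁ = Cardinal.lift.{1} (Order.succ μ) ∧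
        Set.Subsingleton {c : Ordinal | ∃ α ∈ H₀, ∃ β ∈ H₁, f α β = c} := by
  classical
  intro n f hf
  have hreg : (Order.succ μ).IsRegular := Cardinal.isRegular_succ hμ
  -- the solution set coded by a finite sequence `c :: αs`
  let S : List Ordinal.{0} → Set Ordinal.{0} := fun l =>
    {β | β < (Order.succ μ).ord ∧ ∀ α ∈ l.tail, f α β = l.headD 0}
  have hex : ∀ l, ∃ γ, γ < (Order.succ μ).ord ∧
      ((∃ γ' < (Order.succ μ).ord, ∀ β ∈ S l, β ≤ γ') → ∀ β ∈ S l, β ≤ γ) := by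
    intro l
    by_cases h : ∃ γ' < (Order.succ μ).ord, ∀ β ∈ S l, β ≤ γ'
    · obtain ⟨γ, h1, h2⟩ := h
      exact ⟨γ, h1, fun _ => h2⟩
    · exact ⟨0, hreg.ord_pos, fun h' => absurd h' h⟩
  choose g hg1 hg2 using hex
  have hlt : (Order.succ μ).ord < (Order.succ (Order.succ μ)).ord :=
    Cardinal.ord_lt_ord.2 (Order.lt_succ _)
  obtain ⟨X, hX, hXc, hXg, hXs, hXμ⟩ := hCC g (fun l _ => (hg1 l).trans hlt)
  obtain ⟨γ, hγ, hγb⟩ := bdd_of_small hreg (X ∩ Set.Iio (Order.succ μ).ord)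
    Set.inter_subset_right (by rw [hXs]; exact Cardinal.lift_lt.2 (Order.lt_succ μ))
  have hδ : Order.succ γ < (Order.succ μ).ord :=
    (Cardinal.isSuccLimit_ord hreg.aleph0_le).succ_lt hγ
  let F : X → Set.Iio μ.ord := fun α => ⟨f α (Order.succ γ), hf _ (hX α.2) _ hδ⟩
  have hinf : Infinite X := by
    rw [Cardinal.infinite_iff, hXc]
    exact Cardinal.aleph0_le_lift.2 hreg.aleph0_le
  obtain ⟨c, hc⟩ := Cardinal.exists_infinite_fiber F (by
    rw [hXc, Cardinal.mk_Iio_ordinal, Cardinal.card_ord]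
    exact Cardinal.lift_lt.2 (Order.lt_succ μ))
  obtain ⟨t, ht, htc⟩ := (Set.infinite_coe_iff.1 hc).exists_subset_card_eq n
  let H : Finset Ordinal.{0} := t.map (Function.Embedding.subtype _)
  have hHX : ∀ α ∈ H, α ∈ X ∧ f α (Order.succ γ) = c := by
    intro α hα
    obtain ⟨a, ha, rfl⟩ := Finset.mem_map.1 hα
    exact ⟨a.2, congrArg Subtype.val (ht ha)⟩
  have hSδ : Order.succ γ ∈ S (c.1 :: H.toList) :=
    ⟨hδ, fun α hα => (hHX α (by simpa using hα)).2⟩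
  have hgX : g (c.1 :: H.toList) ∈ X := by
    apply hXg
    intro a ha
    rcases List.mem_cons.1 ha with rfl | ha
    · exact hXμ _ c.2
    · exact (hHX a (by simpa using ha)).1
  have hunb : ¬ ∃ γ' < (Order.succ μ).ord, ∀ β ∈ S (c.1 :: H.toList), β ≤ γ' := by
    intro h
    have h1 := hg2 _ h _ hSδ
    have h2 := hγb _ ⟨hgX, hg1 _⟩
    exact absurd (h1.trans h2) (not_le.2 (Order.lt_succ γ))
  have hSsub : S (c.1 :: H.toList) ⊆ Set.Iio (Order.succ μ).ord := fun β hβ => hβ.1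
  refine ⟨H, S (c.1 :: H.toList), fun α hα => hX (hHX α hα).1, ?_, hSsub, ?_, ?_⟩
  · have hHc : H.card = n := by rw [Finset.card_map, htc]
    simp [hHc]
  · apply le_antisymm
    · refine (Cardinal.mk_le_mk_of_subset hSsub).trans ?_
      rw [Cardinal.mk_Iio_ordinal, Cardinal.card_ord]
    · by_contra h
      exact hunb (bdd_of_small hreg _ hSsub (not_le.1 h))
  · rintro x ⟨α, hα, β, hβ, rfl⟩ y ⟨α', hα', β', hβ', rfl⟩
    have h1 := hβ.2 α (by simpa using hα)
    have h2 := hβ'.2 α' (by simpa using hα')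
    rw [h1, h2]
end

section
/- Let μ be an infinite cardinal and ν a nonzero cardinal with ν ≤ μ. Suppose I is a normal, fine, μ⁺-complete proper ideal over μ⁺ that is (μ⁺⁺, ν, ν)-saturated. Then the polarized partition relation (μ⁺⁺, μ⁺) → (ν, μ⁺)_μ holds: for every function f : μ⁺⁺ × μ⁺ → μ there exist H₀ ⊆ μ⁺⁺ with |H₀| = ν and H₁ ⊆ μ⁺ with |H₁| = μ⁺ such that f takes at most one value on H₀ × H₁. -/
open Cardinal Set

/-- If `μ⁺` carries a normal, fine, `μ⁺`-complete proper ideal which is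
`(μ⁺⁺, ν, ν)`-saturated (for some nonzero `ν ≤ μ`), then the polarized partition
relation `(μ⁺⁺, μ⁺) → (ν, μ⁺)_μ` holds. -/
theorem saturated_ideal_implies_polarized_partition
    (μ ν : Cardinal.{0}) (hμ : ℵ₀ ≤ μ) (hν0 : ν ≠ 0) (hνμ : ν ≤ μ)
    (I : Set (Set Ordinal.{0}))
    -- members of `I` are subsets of `μ⁺`
    (hIsub : ∀ A ∈ I, A ⊆ Set.Iio (Order.succ μ).ord)
    -- `I` is closed under subsets
    (hdown : ∀ A ∈ I, ∀ B ⊆ A, B ∈ I)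
    -- `I` is `μ⁺`-complete
    (hcomplete : ∀ S : Set (Set Ordinal), S ⊆ I →
      #S < Cardinal.lift.{1} (Order.succ μ) → ⋃₀ S ∈ I)
    -- `I` is fine
    (hfine : ∀ ξ < (Order.succ μ).ord, ({ξ} : Set Ordinal) ∈ I)
    -- `I` is proper
    (hproper : Set.Iio (Order.succ μ).ord ∉ I)
    -- `I` is normal: diagonal unions of members of `I` are in `I`
    (hnormal : ∀ A : Ordinal → Set Ordinal,
      (∀ ξ < (Order.succ μ).ord, A ξ ∈ I) →
      {α : Ordinal | α < (Order.succ μ).ord ∧ ∃ ξ < α, α ∈ A ξ} ∈ I)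
    -- `I` is `(μ⁺⁺, ν, ν)`-saturated
    (hsat : ∀ A : Ordinal → Set Ordinal,
      (∀ i < (Order.succ (Order.succ μ)).ord,
        A i ⊆ Set.Iio (Order.succ μ).ord ∧ A i ∉ I) →
      ∃ S : Set Ordinal, S ⊆ Set.Iio (Order.succ (Order.succ μ)).ord ∧
        #S = Cardinal.lift.{1} ν ∧
        ∀ T ⊆ S, T.Nonempty → #T ≤ Cardinal.lift.{1} ν → (⋂ i ∈ T, A i) ∉ I) :
    ∀ f : Ordinal → Ordinal → Ordinal,
      (∀ α < (Order.succ (Order.succ μ)).ord, ∀ β < (Order.succ μ).ord, f α β < μ.ord) →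
      ∃ H₀ H₁ : Set Ordinal,
        H₀ ⊆ Set.Iio (Order.succ (Order.succ μ)).ord ∧ #H₀ = Cardinal.lift.{1} ν ∧
        H₁ ⊆ Set.Iio (Order.succ μ).ord ∧ #H₁ = Cardinal.lift.{1} (Order.succ μ) ∧
        Set.Subsingleton {c : Ordinal | ∃ α ∈ H₀, ∃ β ∈ H₁, f α β = c} := by
  intro f hf
  have hμ1 : ℵ₀ ≤ Order.succ μ := hμ.trans (Order.le_succ μ)
  have hreg : (Cardinal.lift.{1} (Order.succ (Order.succ μ))).IsRegular := by
    rw [Cardinal.lift_succ]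
    exact Cardinal.isRegular_succ (Cardinal.aleph0_le_lift.2 hμ1)
  -- positive sets have full size
  have hbig : ∀ B : Set Ordinal.{0}, B ⊆ Set.Iio (Order.succ μ).ord → B ∉ I →
      #B = Cardinal.lift.{1} (Order.succ μ) := by
    intro B hB hBI
    apply le_antisymm
    · refine (Cardinal.mk_le_mk_of_subset hB).trans ?_
      rw [Cardinal.mk_Iio_ordinal, Cardinal.card_ord]
    · by_contra hlt
      rw [not_le] at hlt
      apply hBI
      have h := hcomplete ((fun ξ => ({ξ} : Set Ordinal)) '' B)
        (by rintro _ ⟨ξ, hξ, rfl⟩; exact hfine ξ (hB hξ))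
        (Cardinal.mk_image_le.trans_lt hlt)
      refine hdown _ h _ ?_
      intro ξ hξ
      exact ⟨{ξ}, ⟨ξ, hξ, rfl⟩, rfl⟩
  -- choose a positive colour class for each row
  have hcol : ∀ α : Set.Iio (Order.succ (Order.succ μ)).ord, ∃ c : Set.Iio μ.ord,
      {β : Ordinal | β < (Order.succ μ).ord ∧ f α β = c} ∉ I := by
    intro α
    by_contra hcon
    push Not at hcon
    apply hproper
    have h := hcomplete (Set.range (fun c : Set.Iio μ.ord =>
        {β : Ordinal | β < (Order.succ μ).ord ∧ f α β = c}))
      (by rintro _ ⟨c, rfl⟩; exact hcon c)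
      (by
        refine Cardinal.mk_range_le.trans_lt ?_
        rw [Cardinal.mk_Iio_ordinal, Cardinal.card_ord, Cardinal.lift_lt]
        exact Order.lt_succ μ)
    refine hdown _ h _ ?_
    intro β hβ
    exact ⟨_, ⟨⟨f α β, hf α α.2 β hβ⟩, rfl⟩, hβ, rfl⟩
  choose c hc using hcol
  obtain ⟨a, ha⟩ := Cardinal.infinite_pigeonhole_card c
    (Cardinal.lift.{1} (Order.succ (Order.succ μ)))
    (by rw [Cardinal.mk_Iio_ordinal, Cardinal.card_ord])
    hreg.aleph0_le
    (by
      rw [hreg.cof_ord, Cardinal.mk_Iio_ordinal, Cardinal.card_ord, Cardinal.lift_lt]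
      exact (Order.lt_succ μ).trans (Order.lt_succ _))
  have hle : #(Set.Iio (Order.succ (Order.succ μ)).ord) ≤ #(c ⁻¹' {a}) := by
    rwa [Cardinal.mk_Iio_ordinal, Cardinal.card_ord]
  obtain ⟨e⟩ := hle
  let g : Ordinal.{0} → Ordinal.{0} := fun i =>
    if h : i < (Order.succ (Order.succ μ)).ord then (e ⟨i, h⟩).1.1 else 0
  have hg : ∀ i (h : i < (Order.succ (Order.succ μ)).ord), g i = (e ⟨i, h⟩).1.1 :=
    fun i h => dif_pos h
  obtain ⟨S, hS, hScard, hST⟩ := hsat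
    (fun i => {β : Ordinal | β < (Order.succ μ).ord ∧ f (g i) β = a}) (by
      intro i hi
      refine ⟨fun β hβ => hβ.1, ?_⟩
      have h1 := hc (e ⟨i, hi⟩).1
      have h2 : c (e ⟨i, hi⟩).1 = a := (e ⟨i, hi⟩).2
      rw [h2] at h1
      simpa only [hg i hi] using h1)
  have hSne : S.Nonempty := by
    rw [Set.nonempty_iff_ne_empty]
    rintro rfl
    apply hν0
    simpa using hScard.symm
  have hinj : Set.InjOn g S := by
    intro i hi j hj hij
    rw [hg i (hS hi), hg j (hS hj)] at hij
    have := e.injective (Subtype.ext (Subtype.ext hij))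
    exact congrArg Subtype.val this
  have hpos := hST S subset_rfl hSne hScard.le
  have hH1 : (⋂ i ∈ S, {β : Ordinal | β < (Order.succ μ).ord ∧ f (g i) β = a}) ⊆
      Set.Iio (Order.succ μ).ord := by
    obtain ⟨i, hi⟩ := hSne
    intro β hβ
    exact (Set.mem_iInter₂.1 hβ i hi).1
  refine ⟨g '' S, _, ?_, ?_, hH1, hbig _ hH1 hpos, ?_⟩
  · rintro _ ⟨i, hi, rfl⟩
    rw [hg i (hS hi)]
    exact (e ⟨i, hS hi⟩).1.2
  · rw [Cardinal.mk_image_eq_of_injOn _ _ hinj, hScard]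
  · rintro x ⟨_, ⟨i, hi, rfl⟩, β, hβ, rfl⟩ y ⟨_, ⟨j, hj, rfl⟩, γ, hγ, rfl⟩
    rw [(Set.mem_iInter₂.1 hβ i hi).2, (Set.mem_iInter₂.1 hγ j hj).2]
end

section
/- Let μ be an infinite cardinal with 2^μ = μ⁺. Suppose μ⁺ carries a strongly saturated ideal, that is, a normal, fine, μ⁺-complete proper ideal I over μ⁺ that is (μ⁺⁺, μ⁺⁺, μ)-saturated. Then the polarized partition relation (μ⁺⁺, μ⁺) → (μ⁺, μ⁺)_μ holds: for every function f : μ⁺⁺ × μ⁺ → μ there exist H₀ ⊆ μ⁺⁺ with |H₀| = μ⁺ and H₁ ⊆ μ⁺ with |H₁| = μ⁺ such that f takes at most one value on H₀ × H₁. -/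
open Cardinal Set

universe u

theorem polarized_core {X Y : Type u} (m : Cardinal.{u}) (hm : ℵ₀ ≤ m)
    (h : 2 ^ m = Order.succ m) (hX : Order.succ m < #X) (hY : #Y = Order.succ m)
    (R : X → Y → Prop)
    (hpos : ∀ T : Set X, #T ≤ m → ∀ B : Set Y, #B ≤ m → ∃ y, y ∉ B ∧ ∀ x ∈ T, R x y) :
    ∃ (H0 : Set X) (H1 : Set Y), #H0 = Order.succ m ∧ #H1 = Order.succ m ∧
      ∀ x ∈ H0, ∀ y ∈ H1, R x y := by
  classical
  have hm1 : (1 : Cardinal) ≤ m := le_trans one_le_aleph0 hm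
  have hs : ℵ₀ ≤ Order.succ m := hm.trans (Order.le_succ m)
  -- the good element
  obtain ⟨x₀, hx₀⟩ : ∃ x₀ : X, ∀ b : m.out → Y, (∀ i, R x₀ (b i)) →
      Order.succ m < #{x : X | ∀ i, R x (b i)} := by
    by_contra! hcon
    choose b hb1 hb2 using hcon
    have hcard : #(m.out → Y) = Order.succ m := by
      rw [← Cardinal.power_def, hY, mk_out, ← h, ← Cardinal.power_mul, mul_eq_self hm]
    have hcov : (Set.univ : Set X) ⊆ ⋃ c : Set.range b, {x : X | ∀ i, R x (c.1 i)} := by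
      intro x _
      exact Set.mem_iUnion.2 ⟨⟨b x, x, rfl⟩, hb1 x⟩
    have h1 := mk_le_mk_of_subset hcov
    rw [mk_univ] at h1
    have h2 : #(⋃ c : Set.range b, {x : X | ∀ i, R x (c.1 i)}) ≤ Order.succ m := by
      refine (mk_iUnion_le _).trans ?_
      have h3 : (⨆ c : Set.range b, #{x : X | ∀ i, R x (c.1 i)}) ≤ Order.succ m := by
        refine ciSup_le' ?_
        rintro ⟨_, x, rfl⟩
        exact hb2 x
      calc _ ≤ Order.succ m * Order.succ m :=
            mul_le_mul' ((mk_set_le _).trans hcard.le) h3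
        _ = Order.succ m := mul_eq_self hs
    exact absurd (hX.trans_le (h1.trans h2)) (lt_irrefl _)
  let Q : Set (X × Y) → X × Y → Prop := fun s q =>
    R x₀ q.2 ∧ R q.1 q.2 ∧ ∀ p ∈ s, p.1 ≠ q.1 ∧ p.2 ≠ q.2 ∧ R p.1 q.2 ∧ R q.1 p.2
  have step : ∀ s : Set (X × Y), #s ≤ m → (∀ p ∈ s, R x₀ p.2) → ∃ q, Q s q := by
    intro s hsm hsR
    obtain ⟨y₀, -, hy₀⟩ := hpos {x₀} (by simpa using hm1) ∅ (by simp)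
    have hfst : #(Prod.fst '' s) ≤ m := mk_image_le.trans hsm
    have hsnd : #(Prod.snd '' s) ≤ m := mk_image_le.trans hsm
    have hins : ∀ {Z : Type u} (z : Z) (t : Set Z), #t ≤ m → #(insert z t : Set Z) ≤ m := by
      intro Z z t ht
      exact mk_insert_le.trans ((add_le_add ht hm1).trans (add_eq_self hm).le)
    have hB := hins y₀ _ hsnd
    obtain ⟨e, he⟩ : ∃ e : m.out → (insert y₀ (Prod.snd '' s) : Set Y),
        Function.Surjective e := by
      rw [← mk_out m, le_def] at hB
      obtain ⟨i⟩ := hB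
      have : Nonempty (insert y₀ (Prod.snd '' s) : Set Y) := ⟨⟨y₀, Set.mem_insert _ _⟩⟩
      exact ⟨Function.invFun i, Function.invFun_surjective i.injective⟩
    have hbig := hx₀ (fun i => (e i).1) (by
      intro i
      rcases (e i).2 with h1 | ⟨p, hp, h1⟩
      · rw [h1]; exact hy₀ _ rfl
      · rw [← h1]; exact hsR p hp)
    obtain ⟨x, hx1, hx2⟩ : ∃ x, x ∈ {x : X | ∀ i, R x (e i).1} ∧ x ∉ Prod.fst '' s := by
      by_contra! hc
      have := mk_le_mk_of_subset (show {x : X | ∀ i, R x (e i).1} ⊆ Prod.fst '' s from hc)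
      exact absurd (hbig.trans_le (this.trans hfst)) (not_lt.2 (Order.le_succ m))
    obtain ⟨y, hy1, hy2⟩ := hpos (insert x₀ (insert x (Prod.fst '' s)))
      (hins _ _ (hins _ _ hfst)) _ hsnd
    refine ⟨(x, y), hy2 _ (by simp), hy2 _ (by simp), fun p hp => ⟨?_, ?_, ?_, ?_⟩⟩
    · intro hh; exact hx2 ⟨p, hp, hh⟩
    · intro hh; exact hy1 ⟨p, hp, hh⟩
    · exact hy2 _ (Set.mem_insert_of_mem _ (Set.mem_insert_of_mem _ ⟨p, hp, rfl⟩))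
    · obtain ⟨i, hi⟩ := he ⟨p.2, Set.mem_insert_of_mem _ ⟨p, hp, rfl⟩⟩
      have := hx1 i
      rw [hi] at this
      exact this
  obtain ⟨q₀, -⟩ := step ∅ (by simp) (by simp)
  have : Nonempty (X × Y) := ⟨q₀⟩
  let J := (Order.succ m).ord.ToType
  have wf : WellFounded ((· < ·) : J → J → Prop) := wellFounded_lt
  let g : J → X × Y := wf.fix (fun i rec =>
    Classical.epsilon (Q {p | ∃ (j : J) (hj : j < i), p = rec j hj}))
  have hg : ∀ i, g i = Classical.epsilon (Q {p | ∃ (j : J) (_ : j < i), p = g j}) := by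
    intro i
    exact wf.fix_eq _ i
  have hQ : ∀ i, Q {p | ∃ (j : J) (_ : j < i), p = g j} (g i) := by
    intro i
    induction i using wf.induction with
    | _ i ih =>
      rw [hg i]
      apply Classical.epsilon_spec (p := Q {p | ∃ (j : J) (_ : j < i), p = g j})
      apply step
      · have hsub : {p | ∃ (j : J) (_ : j < i), p = g j} ⊆ g '' Set.Iio i := by
          rintro p ⟨j, hj, rfl⟩
          exact ⟨j, hj, rfl⟩
        refine (mk_le_mk_of_subset hsub).trans (mk_image_le.trans ?_)
        exact Order.lt_succ_iff.1 (Cardinal.mk_Iio_ord_toType i)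
      · rintro p ⟨j, hj, rfl⟩
        exact (ih j hj).1
  have hlt : ∀ i j, i < j → (g i).1 ≠ (g j).1 ∧ (g i).2 ≠ (g j).2 ∧ R (g i).1 (g j).2 ∧
      R (g j).1 (g i).2 := fun i j hij => (hQ j).2.2 (g i) ⟨i, hij, rfl⟩
  have hJ : #J = Order.succ m := mk_ord_toType _
  refine ⟨Set.range fun i => (g i).1, Set.range fun i => (g i).2, ?_, ?_, ?_⟩
  · rw [mk_range_eq, hJ]
    intro i j hij
    rcases lt_trichotomy i j with h1 | h1 | h1
    · exact absurd hij (hlt i j h1).1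
    · exact h1
    · exact absurd hij.symm (hlt j i h1).1
  · rw [mk_range_eq, hJ]
    intro i j hij
    rcases lt_trichotomy i j with h1 | h1 | h1
    · exact absurd hij (hlt i j h1).2.1
    · exact h1
    · exact absurd hij.symm (hlt j i h1).2.1
  · rintro _ ⟨i, rfl⟩ _ ⟨j, rfl⟩
    rcases lt_trichotomy i j with h1 | h1 | h1
    · exact (hlt i j h1).2.2.1
    · subst h1; exact (hQ i).2.1
    · exact (hlt j i h1).2.2.2

/-- If `2^μ = μ⁺` and `μ⁺` carries a strongly saturated ideal, i.e. a normal, fine,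
`μ⁺`-complete proper ideal which is `(μ⁺⁺, μ⁺⁺, μ)`-saturated, then the polarized
partition relation `(μ⁺⁺, μ⁺) → (μ⁺, μ⁺)_μ` holds. -/
theorem strongly_saturated_ideal_implies_polarized_partition
    (μ : Cardinal.{0}) (hμ : ℵ₀ ≤ μ) (hGCH : 2 ^ μ = Order.succ μ)
    (I : Set (Set Ordinal.{0}))
    -- members of `I` are subsets of `μ⁺`
    (hIsub : ∀ A ∈ I, A ⊆ Set.Iio (Order.succ μ).ord)
    -- `I` is closed under subsets
    (hdown : ∀ A ∈ I, ∀ B ⊆ A, B ∈ I)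
    -- `I` is `μ⁺`-complete
    (hcomplete : ∀ S : Set (Set Ordinal), S ⊆ I →
      #S < Cardinal.lift.{1} (Order.succ μ) → ⋃₀ S ∈ I)
    -- `I` is fine
    (hfine : ∀ ξ < (Order.succ μ).ord, ({ξ} : Set Ordinal) ∈ I)
    -- `I` is proper
    (hproper : Set.Iio (Order.succ μ).ord ∉ I)
    -- `I` is normal: diagonal unions of members of `I` are in `I`
    (hnormal : ∀ A : Ordinal → Set Ordinal,
      (∀ ξ < (Order.succ μ).ord, A ξ ∈ I) →
      {α : Ordinal | α < (Order.succ μ).ord ∧ ∃ ξ < α, α ∈ A ξ} ∈ I)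
    -- `I` is `(μ⁺⁺, μ⁺⁺, μ)`-saturated, i.e. strongly saturated
    (hsat : ∀ A : Ordinal → Set Ordinal,
      (∀ i < (Order.succ (Order.succ μ)).ord,
        A i ⊆ Set.Iio (Order.succ μ).ord ∧ A i ∉ I) →
      ∃ S : Set Ordinal, S ⊆ Set.Iio (Order.succ (Order.succ μ)).ord ∧
        #S = Cardinal.lift.{1} (Order.succ (Order.succ μ)) ∧
        ∀ T ⊆ S, T.Nonempty → #T ≤ Cardinal.lift.{1} μ → (⋂ i ∈ T, A i) ∉ I) :
    ∀ f : Ordinal → Ordinal → Ordinal,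
      (∀ α < (Order.succ (Order.succ μ)).ord, ∀ β < (Order.succ μ).ord, f α β < μ.ord) →
      ∃ H₀ H₁ : Set Ordinal,
        H₀ ⊆ Set.Iio (Order.succ (Order.succ μ)).ord ∧
        #H₀ = Cardinal.lift.{1} (Order.succ μ) ∧
        H₁ ⊆ Set.Iio (Order.succ μ).ord ∧ #H₁ = Cardinal.lift.{1} (Order.succ μ) ∧
        Set.Subsingleton {c : Ordinal | ∃ α ∈ H₀, ∃ β ∈ H₁, f α β = c} := by
  intro f hf
  classical
  set m : Cardinal.{1} := Cardinal.lift.{1} μ with hmdef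
  have hm : ℵ₀ ≤ m := by simpa [hmdef] using hμ
  have hsucc : Cardinal.lift.{1} (Order.succ μ) = Order.succ m := Cardinal.lift_succ μ
  have hsucc2 : Cardinal.lift.{1} (Order.succ (Order.succ μ)) = Order.succ (Order.succ m) := by
    rw [Cardinal.lift_succ, hsucc]
  have h2 : 2 ^ m = Order.succ m := by
    rw [← hsucc, ← hGCH]; simp [hmdef]
  have hcardμ : #(Set.Iio μ.ord) = m := by
    rw [Cardinal.mk_Iio_ordinal, card_ord]
  -- small subsets are in the ideal
  have hunion : ∀ {ι : Type 1} (F : ι → Set Ordinal.{0}), #ι ≤ m → (∀ i, F i ∈ I) →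
      (⋃ i, F i) ∈ I := by
    intro ι F hι hF
    rw [← Set.sUnion_range]
    apply hcomplete
    · rintro _ ⟨i, rfl⟩; exact hF i
    · rw [hsucc]; exact Order.lt_succ_iff.2 (mk_range_le.trans hι)
  have hsmall : ∀ B : Set Ordinal.{0}, B ⊆ Set.Iio (Order.succ μ).ord → #B ≤ m → B ∈ I := by
    intro B hB hBm
    have := hunion (fun b : B => ({b.1} : Set Ordinal)) hBm (fun b => hfine _ (hB b.2))
    simpa using this
  have hcol : ∀ α, α < (Order.succ (Order.succ μ)).ord → ∃ c : Set.Iio μ.ord,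
      {β | β < (Order.succ μ).ord ∧ f α β = c.1} ∉ I := by
    intro α hα
    by_contra! hc
    apply hproper
    refine hdown _ (hunion _ hcardμ.le hc) _ ?_
    intro β hβ
    exact Set.mem_iUnion.2 ⟨⟨f α β, hf α hα β hβ⟩, hβ, rfl⟩
  have hne : Nonempty (Set.Iio μ.ord) := by
    rw [← mk_ne_zero_iff, hcardμ]
    exact (aleph0_pos.trans_le hm).ne'
  choose! c hc using hcol
  let A : Ordinal.{0} → Set Ordinal.{0} := fun α =>
    {β | β < (Order.succ μ).ord ∧ f α β = (c α).1}
  obtain ⟨S, hS1, hS2, hS3⟩ := hsat A (fun i hi => ⟨fun β hβ => hβ.1, hc i hi⟩)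
  rw [hsucc2] at hS2
  obtain ⟨k, hk⟩ : ∃ k : Set.Iio μ.ord, Order.succ m < #{x : S | c x.1 = k} := by
    by_contra! hcon
    have hcov : (Set.univ : Set S) ⊆ ⋃ k : Set.Iio μ.ord, {x : S | c x.1 = k} := by
      intro x _
      exact Set.mem_iUnion.2 ⟨c x.1, rfl⟩
    have h1 := mk_le_mk_of_subset hcov
    rw [mk_univ, hS2] at h1
    have h3 : #(⋃ k : Set.Iio μ.ord, {x : S | c x.1 = k}) ≤ Order.succ m := by
      refine (mk_iUnion_le _).trans ?_
      calc _ ≤ Order.succ m * Order.succ m :=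
            mul_le_mul' (hcardμ.le.trans (Order.le_succ m)) (ciSup_le' hcon)
        _ = Order.succ m := mul_eq_self (hm.trans (Order.le_succ m))
    exact absurd (h1.trans h3) (not_le.2 (Order.lt_succ _))
  have hXne : Nonempty {x : S | c x.1 = k} := by
    rw [← mk_ne_zero_iff]
    exact (lt_of_le_of_lt zero_le hk).ne'
  obtain ⟨x₁⟩ := hXne
  have hYc : #(Set.Iio (Order.succ μ).ord) = Order.succ m := by
    rw [Cardinal.mk_Iio_ordinal, card_ord, hsucc]
  obtain ⟨H0, H1, hH0, hH1, hH⟩ := polarized_core (X := {x : S | c x.1 = k})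
    (Y := Set.Iio (Order.succ μ).ord) m hm h2 hk hYc (fun x y => f x.1.1 y.1 = k.1) (by
      intro T hT B hB
      let T' : Set Ordinal.{0} := (fun x : {x : S | c x.1 = k} => x.1.1) '' (insert x₁ T)
      have hT' : #T' ≤ m := mk_image_le.trans (mk_insert_le.trans
        ((add_le_add hT (one_le_aleph0.trans hm)).trans (add_eq_self hm).le))
      have hpos := hS3 T' (by rintro _ ⟨x, -, rfl⟩; exact x.1.2)
        ⟨_, x₁, Set.mem_insert _ _, rfl⟩ hT'
      have hBI := hsmall (Subtype.val '' B) (by rintro _ ⟨y, -, rfl⟩; exact y.2)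
        (mk_image_le.trans hB)
      obtain ⟨β, hβ1, hβ2⟩ : ∃ β, β ∈ (⋂ i ∈ T', A i) ∧ β ∉ Subtype.val '' B := by
        by_contra! hcon
        exact hpos (hdown _ hBI _ hcon)
      have hA : ∀ x ∈ insert x₁ T, β ∈ A x.1.1 := by
        intro x hx
        exact Set.mem_iInter₂.1 hβ1 _ ⟨x, hx, rfl⟩
      refine ⟨⟨β, (hA x₁ (Set.mem_insert _ _)).1⟩, fun hh => hβ2 ⟨_, hh, rfl⟩, ?_⟩
      intro x hx
      have h1 := (hA x (Set.mem_insert_of_mem _ hx)).2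
      have h3 : c x.1.1 = k := x.2
      rw [h3] at h1
      exact h1)
  refine ⟨(fun x : {x : S | c x.1 = k} => x.1.1) '' H0, Subtype.val '' H1, ?_, ?_, ?_, ?_, ?_⟩
  · rintro _ ⟨x, -, rfl⟩; exact hS1 x.1.2
  · rw [mk_image_eq (fun a b hab => Subtype.ext (Subtype.ext hab)), hH0, hsucc]
  · rintro _ ⟨y, -, rfl⟩; exact y.2
  · rw [mk_image_eq Subtype.val_injective, hH1, hsucc]
  · rintro _ ⟨_, ⟨x, hx, rfl⟩, _, ⟨y, hy, rfl⟩, rfl⟩ _ ⟨_, ⟨x', hx', rfl⟩, _, ⟨y', hy', rfl⟩, rfl⟩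
    exact (hH x hx y hy).trans (hH x' hx' y' hy').symm
end

section
/- Let μ be an infinite cardinal. Suppose there is a Kurepa family on μ⁺, i.e., a family ⟨A_i : i < μ⁺⁺⟩ of pairwise distinct subsets of μ⁺ such that for every β < μ⁺ the set of traces {A_i ∩ β : i < μ⁺⁺} has cardinality at most μ (such a family is given by the branches of a Kurepa tree on μ⁺). Then the negative polarized partition relation (μ⁺⁺, μ⁺) ↛ (2, μ⁺)_μ holds: there is a function f : μ⁺⁺ × μ⁺ → μ such that for all distinct i, j < μ⁺⁺ and every H₁ ⊆ μ⁺ with |H₁| = μ⁺, f takes at least two values on {i, j} × H₁. -/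
open Cardinal Set

/-- If there is a Kurepa family on `μ⁺` (a family of `μ⁺⁺` pairwise distinct subsets of
`μ⁺` all of whose trace sets at levels `β < μ⁺` have cardinality at most `μ`), then the
negative polarized partition relation `(μ⁺⁺, μ⁺) ↛ (2, μ⁺)_μ` holds. -/
theorem kurepa_family_implies_negative_polarized_partition
    (μ : Cardinal.{0}) (hμ : ℵ₀ ≤ μ)
    (A : Ordinal.{0} → Set Ordinal.{0})
    -- each `A i` is a subset of `μ⁺`
    (hA : ∀ i < (Order.succ (Order.succ μ)).ord, A i ⊆ Set.Iio (Order.succ μ).ord)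
    -- the `A i` are pairwise distinct
    (hinj : ∀ i < (Order.succ (Order.succ μ)).ord, ∀ j < (Order.succ (Order.succ μ)).ord,
      A i = A j → i = j)
    -- for every `β < μ⁺` there are at most `μ` many traces `A i ∩ β`
    (htrace : ∀ β < (Order.succ μ).ord,
      #{s : Set Ordinal | ∃ i < (Order.succ (Order.succ μ)).ord, s = A i ∩ Set.Iio β}
        ≤ Cardinal.lift.{1} μ) :
    ∃ f : Ordinal → Ordinal → Ordinal,
      (∀ α < (Order.succ (Order.succ μ)).ord, ∀ β < (Order.succ μ).ord, f α β < μ.ord) ∧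
      ∀ i < (Order.succ (Order.succ μ)).ord, ∀ j < (Order.succ (Order.succ μ)).ord,
        i ≠ j →
        ∀ H₁ ⊆ Set.Iio (Order.succ μ).ord, #H₁ = Cardinal.lift.{1} (Order.succ μ) →
          ¬ Set.Subsingleton
            {c : Ordinal | ∃ a ∈ ({i, j} : Set Ordinal), ∃ β ∈ H₁, f a β = c} := by
  have hg : ∀ β : Ordinal.{0}, ∃ g : Set Ordinal.{0} → Ordinal.{0},
      β < (Order.succ μ).ord →
      (∀ i < (Order.succ (Order.succ μ)).ord, g (A i ∩ Set.Iio β) < μ.ord) ∧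
      ∀ i < (Order.succ (Order.succ μ)).ord, ∀ j < (Order.succ (Order.succ μ)).ord,
        g (A i ∩ Set.Iio β) = g (A j ∩ Set.Iio β) → A i ∩ Set.Iio β = A j ∩ Set.Iio β := by
    intro β
    by_cases hβ : β < (Order.succ μ).ord
    · have h1 := htrace β hβ
      have h2 : #(Set.Iio μ.ord) = Cardinal.lift.{1} μ := by
        rw [Cardinal.mk_Iio_ordinal, Cardinal.card_ord]
      rw [← h2, Cardinal.le_def] at h1
      obtain ⟨e⟩ := h1
      classical
      refine ⟨fun s => if h : ∃ i < (Order.succ (Order.succ μ)).ord, s = A i ∩ Set.Iio β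
        then (e ⟨s, h⟩ : Ordinal) else 0, fun _ => ⟨?_, ?_⟩⟩
      · intro i hi
        have h : ∃ k < (Order.succ (Order.succ μ)).ord,
          A i ∩ Set.Iio β = A k ∩ Set.Iio β := ⟨i, hi, rfl⟩
        simp only [dif_pos h]
        exact (e _).2
      · intro i hi j hj hij
        have h : ∃ k < (Order.succ (Order.succ μ)).ord,
          A i ∩ Set.Iio β = A k ∩ Set.Iio β := ⟨i, hi, rfl⟩
        have h' : ∃ k < (Order.succ (Order.succ μ)).ord,
          A j ∩ Set.Iio β = A k ∩ Set.Iio β := ⟨j, hj, rfl⟩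
        simp only [dif_pos h, dif_pos h'] at hij
        exact congrArg Subtype.val (e.injective (Subtype.ext hij))
    · exact ⟨fun _ => 0, fun h => absurd h hβ⟩
  choose g hg using hg
  refine ⟨fun α β => g β (A α ∩ Set.Iio β), fun α hα β hβ => (hg β hβ).1 α hα, ?_⟩
  intro i hi j hj hij H hH hcard hsub
  have hne : A i ≠ A j := fun h => hij (hinj i hi j hj h)
  obtain ⟨δ, hδ⟩ : ∃ δ, ¬ (δ ∈ A i ↔ δ ∈ A j) := by
    by_contra! h
    exact hne (Set.ext h)
  have hδlt : δ < (Order.succ μ).ord := by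
    by_cases h : δ ∈ A i
    · exact hA i hi h
    · by_cases h' : δ ∈ A j
      · exact hA j hj h'
      · exact absurd (iff_of_false h h') hδ
  have hlim : Order.succ δ < (Order.succ μ).ord :=
    (Cardinal.isSuccLimit_ord (hμ.trans (Order.le_succ μ))).succ_lt hδlt
  obtain ⟨β, hβH, hβ⟩ : ∃ β ∈ H, δ < β := by
    by_contra! h
    have hs : H ⊆ Set.Iio (Order.succ δ) := fun x hx => Order.lt_succ_of_le (h x hx)
    have h1 := Cardinal.mk_le_mk_of_subset hs
    rw [hcard, Cardinal.mk_Iio_ordinal, Cardinal.lift_le] at h1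
    exact absurd (Cardinal.lt_ord.1 hlim) (not_lt.2 h1)
  have heq := hsub ⟨i, by simp, β, hβH, rfl⟩ ⟨j, by simp, β, hβH, rfl⟩
  have ht := (hg β (hH hβH)).2 i hi j hj heq
  apply hδ
  have := Set.ext_iff.1 ht δ
  simpa [hβ] using this
end

section
/- Let μ < λ be infinite cardinals and let Z = {x ⊆ λ⁺ : |x| = μ⁺}. Suppose there is a normal, fine, μ⁺-complete, λ-centered proper ideal I on Z. Then Tr_Chr(λ⁺, μ⁺) holds: every graph whose vertex set has cardinality λ⁺ and whose chromatic number is λ⁺ has an induced subgraph on a set of μ⁺ vertices whose chromatic number is μ⁺. -/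
open Cardinal Set

/-- `G` has a proper coloring using `κ` colors. -/
def CardColorable {V : Type*} (G : SimpleGraph V) (κ : Cardinal.{0}) : Prop :=
  ∃ c : V → Ordinal.{0}, (∀ v, c v < κ.ord) ∧ ∀ u v : V, G.Adj u v → c u ≠ c v

/-- `κ` is the chromatic number of `G`: `G` is colorable with `κ` colors but with no
smaller number of colors. -/
def HasChromaticNumber {V : Type*} (G : SimpleGraph V) (κ : Cardinal.{0}) : Prop :=
  CardColorable G κ ∧ ∀ κ' < κ, ¬ CardColorable G κ'

theorem cardColorable_of_map {V : Type} (G : SimpleGraph V) (κ : Cardinal.{0}) {T : Type 1}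
    (hT : #T ≤ Cardinal.lift.{1} κ) (c : V → T) (hc : ∀ u v, G.Adj u v → c u ≠ c v) :
    CardColorable G κ := by
  have h : #T ≤ #(Set.Iio κ.ord) := by
    rw [Cardinal.mk_Iio_ordinal, Cardinal.card_ord]; exact hT
  obtain ⟨g⟩ := Cardinal.le_def _ _ |>.1 h
  refine ⟨fun v => (g (c v)).1, fun v => (g (c v)).2, fun u v huv he => hc u v huv ?_⟩
  exact g.injective (Subtype.ext he)

/-- If `[λ⁺]^{μ⁺}` carries a normal, fine, `μ⁺`-complete, `λ`-centered proper ideal, then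
`Tr_Chr(λ⁺, μ⁺)` holds: every graph of size and chromatic number `λ⁺` has an induced
subgraph on `μ⁺` vertices of chromatic number `μ⁺`. -/
theorem centered_ideal_implies_chromatic_transfer
    (μ lam : Cardinal.{0}) (hμ : ℵ₀ ≤ μ) (hlt : μ < lam)
    (Z : Set (Set Ordinal.{0}))
    (hZ : Z = {x : Set Ordinal | x ⊆ Set.Iio (Order.succ lam).ord ∧
      #x = Cardinal.lift.{1} (Order.succ μ)})
    (I : Set (Set (Set Ordinal.{0})))
    -- members of `I` are subsets of `Z`
    (hIsub : ∀ A ∈ I, A ⊆ Z)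
    -- `I` is closed under subsets
    (hdown : ∀ A ∈ I, ∀ B ⊆ A, B ∈ I)
    -- `I` is proper
    (hproper : Z ∉ I)
    -- `I` is `μ⁺`-complete
    (hcomplete : ∀ S : Set (Set (Set Ordinal)), S ⊆ I →
      #S < Cardinal.lift.{1} (Order.succ μ) → ⋃₀ S ∈ I)
    -- `I` is fine
    (hfine : ∀ α < (Order.succ lam).ord, {x ∈ Z | α ∉ x} ∈ I)
    -- `I` is normal
    (hnormal : ∀ A : Ordinal → Set (Set Ordinal),
      (∀ α < (Order.succ lam).ord, A α ∈ I) →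
      {x ∈ Z | ∃ α ∈ x, x ∈ A α} ∈ I)
    -- `I` is `λ`-centered
    (hcentered : ∃ P : Ordinal.{0} → Set (Set (Set Ordinal)),
      (∀ c < lam.ord, P c ⊆ {A | A ⊆ Z ∧ A ∉ I}) ∧
      (∀ A, A ⊆ Z → A ∉ I → ∃ c < lam.ord, A ∈ P c) ∧
      (∀ c < lam.ord, ∀ F : Finset (Set (Set Ordinal)),
        ↑F ⊆ P c → F.Nonempty → ⋂₀ (F : Set (Set (Set Ordinal))) ∉ I)) :
    ∀ (V : Type) (G : SimpleGraph V), #V = Order.succ lam →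
      HasChromaticNumber G (Order.succ lam) →
      ∃ W : Set V, #W = Order.succ μ ∧
        HasChromaticNumber (G.induce W) (Order.succ μ) := by
  classical
  intro V G hV hG
  by_contra hcon
  push Not at hcon
  obtain ⟨P, hP1, hP2, hP3⟩ := hcentered
  have hle : μ ≤ lam := hlt.le
  -- every induced subgraph of size μ⁺ is μ-colorable
  have hcol : ∀ W : Set V, #W = Order.succ μ → CardColorable (G.induce W) μ := by
    intro W hW
    have h1 : CardColorable (G.induce W) (Order.succ μ) := by
      apply cardColorable_of_map (T := ULift.{1} W) _ _ _ (fun v => ULift.up v)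
      · intro u v huv he
        exact huv.ne (ULift.up_injective he)
      · rw [Cardinal.mk_uLift, hW]
    have h2 := hcon W hW
    unfold HasChromaticNumber at h2
    push Not at h2
    obtain ⟨κ, hκ, c, hc, hc'⟩ := h2 h1
    exact ⟨c, fun v => (hc v).trans_le (Cardinal.ord_le_ord.2 (Order.lt_succ_iff.1 hκ)), hc'⟩
  obtain ⟨f⟩ : Nonempty (V ≃ Set.Iio (Order.succ lam).ord) := by
    apply Cardinal.lift_mk_eq'.1
    rw [Cardinal.mk_Iio_ordinal, Cardinal.card_ord, hV]
    simp
  have hx : ∀ x : Set Ordinal.{0}, ∃ c : V → Ordinal.{0}, x ∈ Z →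
      (∀ v, (f v).1 ∈ x → c v < μ.ord) ∧
      ∀ u v, (f u).1 ∈ x → (f v).1 ∈ x → G.Adj u v → c u ≠ c v := by
    intro x
    by_cases hxZ : x ∈ Z
    · have hxZ' := hxZ
      rw [hZ] at hxZ'
      obtain ⟨hs, hcard⟩ := hxZ'
      let W : Set V := {v | (f v).1 ∈ x}
      have hW : #W = Order.succ μ := by
        let e : W ≃ x :=
          Equiv.ofBijective (fun v => (⟨(f v.1).1, v.2⟩ : x)) (by
            constructor
            · intro a b hab
              apply Subtype.ext
              apply f.injective
              apply Subtype.ext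
              exact congrArg (fun z : x => z.1) hab
            · intro y
              refine ⟨⟨f.symm ⟨y.1, hs y.2⟩, ?_⟩, ?_⟩
              · change (f (f.symm _)).1 ∈ x
                rw [f.apply_symm_apply]; exact y.2
              · apply Subtype.ext
                simp)
        have := Cardinal.lift_mk_eq'.2 ⟨e⟩
        rw [hcard] at this
        rw [Cardinal.lift_id'.{0, 1}] at this
        exact Cardinal.lift_injective this
      obtain ⟨c, hc, hc'⟩ := hcol W hW
      refine ⟨fun v => if h : v ∈ W then c ⟨v, h⟩ else 0, fun _ => ⟨?_, ?_⟩⟩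
      · intro v hv
        have hv' : v ∈ W := hv
        simp only [hv', dite_true]
        exact hc _
      · intro u v hu hv huv
        have hu' : u ∈ W := hu
        have hv' : v ∈ W := hv
        simp only [hu', hv', dite_true]
        exact hc' _ _ huv
    · exact ⟨fun _ => 0, fun h => absurd h hxZ⟩
  choose c hc using hx
  -- a positive set for every vertex
  let A : V → Ordinal.{0} → Set (Set Ordinal.{0}) :=
    fun v i => {x ∈ Z | (f v).1 ∈ x ∧ c x v = i}
  have hpos : ∀ v, ∃ i : Set.Iio μ.ord, A v i.1 ∉ I := by
    intro v
    by_contra hno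
    push Not at hno
    let g : Option (Set.Iio μ.ord) → Set (Set Ordinal.{0}) := fun o =>
      o.elim {x ∈ Z | (f v).1 ∉ x} (fun i => A v i.1)
    have hS := hcomplete (Set.range g) (by
      rintro _ ⟨o, rfl⟩
      cases o with
      | none => exact hfine _ (f v).2
      | some i => exact hno i) (by
      refine Cardinal.mk_range_le.trans_lt ?_
      rw [Cardinal.mk_option, Cardinal.mk_Iio_ordinal, Cardinal.card_ord,
        Cardinal.add_one_eq (by simpa using hμ)]
      exact Cardinal.lift_lt.2 (Order.lt_succ μ))
    refine hproper (hdown _ hS _ ?_)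
    intro x hxZ
    by_cases h : (f v).1 ∈ x
    · exact ⟨_, ⟨some ⟨c x v, (hc x hxZ).1 v h⟩, rfl⟩, hxZ, h, rfl⟩
    · exact ⟨_, ⟨none, rfl⟩, hxZ, h⟩
  choose i hi using hpos
  have hd : ∀ v, ∃ d : Set.Iio lam.ord, A v (i v).1 ∈ P d.1 := by
    intro v
    obtain ⟨d, hd, h⟩ := hP2 (A v (i v).1) (fun x hx => hx.1) (hi v)
    exact ⟨⟨d, hd⟩, h⟩
  choose d hd using hd
  have hempty : (∅ : Set (Set Ordinal.{0})) ∈ I := by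
    have := hcomplete ∅ (Set.empty_subset _) (by
      rw [Cardinal.mk_eq_zero, ← Cardinal.lift_zero.{0, 1}]
      exact Cardinal.lift_lt.2 (zero_le.trans_lt (Order.lt_succ μ)))
    simpa using this
  refine hG.2 lam (Order.lt_succ lam) ?_
  apply cardColorable_of_map (T := Set.Iio lam.ord × Set.Iio μ.ord) _ _ _ (fun v => (d v, i v))
  · intro u v huv he
    obtain ⟨h1, h2⟩ := Prod.mk.inj he
    have h3 := hP3 (d u).1 (d u).2 {A u (i u).1, A v (i v).1} (by
      intro B hB
      simp only [Finset.coe_insert, Finset.coe_singleton, Set.mem_insert_iff,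
        Set.mem_singleton_iff] at hB
      rcases hB with rfl | rfl
      · exact hd u
      · rw [h1]; exact hd v) (Finset.insert_nonempty _ _)
    obtain ⟨x, hx⟩ : (⋂₀ (({A u (i u).1, A v (i v).1} : Finset (Set (Set Ordinal.{0}))) :
        Set (Set (Set Ordinal.{0})))).Nonempty := by
      rw [Set.nonempty_iff_ne_empty]
      intro h0
      rw [h0] at h3
      exact h3 hempty
    have hu : x ∈ A u (i u).1 := hx _ (by simp)
    have hv : x ∈ A v (i v).1 := hx _ (by simp)
    refine (hc x hu.1).2 u v hu.2.1 hv.2.1 huv ?_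
    rw [hu.2.2, hv.2.2, h2]
  · rw [Cardinal.mk_prod, Cardinal.mk_Iio_ordinal, Cardinal.mk_Iio_ordinal, Cardinal.card_ord,
      Cardinal.card_ord, Cardinal.lift_id, Cardinal.lift_id, ← Cardinal.lift_mul,
      Cardinal.lift_le]
    rw [Cardinal.mul_eq_left (hμ.trans hle) hle (by
      intro h; rw [h] at hμ; exact absurd hμ (not_le.2 Cardinal.aleph0_pos))]
end

section
/- Let μ be an infinite cardinal with 2^μ = μ⁺. Then the negative polarized partition relation (μ⁺, μ) ↛ (μ⁺, μ)_2 holds: there is a function f : μ⁺ × μ → 2 such that for every H₀ ⊆ μ⁺ with |H₀| = μ⁺ and every H₁ ⊆ μ with |H₁| = μ, f takes both values 0 and 1 on H₀ × H₁. -/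
open Cardinal Set

/-- Transfinite choice of distinct representatives. -/
theorem polarized_exists_injective {M J : Type u} (S : J → Set M) (hS : ∀ j, #J ≤ #(S j)) :
    ∃ h : J → M, Function.Injective h ∧ ∀ j, h j ∈ S j := by
  classical
  obtain ⟨r, wo, hr⟩ := Cardinal.ord_eq J
  have key : ∀ (j : J) (F : ∀ k, r k j → M), ∃ x ∈ S j, ∀ k (hk : r k j), F k hk ≠ x := by
    intro j F
    by_contra! hc
    have hsub : S j ⊆ Set.range (fun k : {k // r k j} => F k.1 k.2) := by
      intro x hx
      obtain ⟨k, hk, e⟩ := hc x hx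
      exact ⟨⟨k, hk⟩, e⟩
    have h1 : #(S j) ≤ #{k // r k j} := (mk_le_mk_of_subset hsub).trans mk_range_le
    have h2 : #{k // r k j} < #J := by
      have := Ordinal.typein_lt_type r j
      rw [← hr, Cardinal.lt_ord] at this
      exact this
    exact absurd ((hS j).trans h1) (not_le.2 h2)
  choose c hc1 hc2 using key
  let h : J → M := wo.wf.fix c
  have hh : ∀ j, h j = c j (fun k _ => h k) := fun j => wo.wf.fix_eq c j
  have hne : ∀ k j, r k j → h k ≠ h j := by
    intro k j hkj
    rw [hh j]
    exact hc2 j (fun k _ => h k) k hkj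
  refine ⟨h, ?_, ?_⟩
  · intro a b hab
    rcases trichotomous_of r a b with h1 | h1 | h1
    · exact absurd hab (hne _ _ h1)
    · exact h1
    · exact absurd hab.symm (hne _ _ h1)
  · intro j
    rw [hh j]
    exact hc1 _ _

/-- Simultaneous splitting of at most `μ` sets of size `μ`. -/
theorem polarized_split {M I : Type u} (S : I → Set M) (μ : Cardinal.{u}) (hμ : ℵ₀ ≤ μ)
    (hI : #I ≤ μ) (hS : ∀ i, μ ≤ #(S i)) :
    ∃ g : M → Prop, ∀ i, (∃ x ∈ S i, g x) ∧ (∃ x ∈ S i, ¬ g x) := by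
  have hJ : #(I × ULift.{u} Bool) ≤ μ := by
    rw [mk_prod]
    simp only [lift_id]
    refine mul_le_of_le hμ hI ?_
    simp only [mk_uLift, mk_bool, lift_ofNat]
    exact (ofNat_lt_aleph0).le.trans hμ
  obtain ⟨h, hinj, hmem⟩ := polarized_exists_injective (J := I × ULift.{u} Bool)
    (fun j => S j.1) (fun j => hJ.trans (hS j.1))
  refine ⟨fun x => ∃ i, h (i, ⟨true⟩) = x, fun i => ⟨⟨_, hmem (i, ⟨true⟩), i, rfl⟩,
    ⟨_, hmem (i, ⟨false⟩), ?_⟩⟩⟩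
  rintro ⟨k, hk⟩
  have := hinj hk
  simp at this

/-- (Erdős–Hajnal–Rado) If `2^μ = μ⁺` then the negative polarized partition relation
`(μ⁺, μ) ↛ (μ⁺, μ)_2` holds. -/
theorem gch_implies_negative_polarized_partition
    (μ : Cardinal.{0}) (hμ : ℵ₀ ≤ μ) (hGCH : 2 ^ μ = Order.succ μ) :
    ∃ f : Ordinal.{0} → Ordinal.{0} → Ordinal.{0},
      (∀ α < (Order.succ μ).ord, ∀ β < μ.ord, f α β < 2) ∧
      ∀ H₀ ⊆ Set.Iio (Order.succ μ).ord, #H₀ = Cardinal.lift.{1} (Order.succ μ) →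
        ∀ H₁ ⊆ Set.Iio μ.ord, #H₁ = Cardinal.lift.{1} μ →
          (∃ α ∈ H₀, ∃ β ∈ H₁, f α β = 0) ∧ (∃ α ∈ H₀, ∃ β ∈ H₁, f α β = 1) := by
  classical
  have hIio : ∀ o : Ordinal.{0}, #(Set.Iio o) = Cardinal.lift.{1} o.card := fun o =>
    Cardinal.mk_Iio_ordinal o
  have hcard : #(Set (Set.Iio μ.ord)) = #(Set.Iio (Order.succ μ).ord) := by
    rw [mk_set, hIio, hIio, card_ord, card_ord, ← hGCH, lift_power, lift_two]
  obtain ⟨e⟩ := Cardinal.eq.1 hcard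
  have hsmall : ∀ α < (Order.succ μ).ord, #(Set.Iic α) ≤ Cardinal.lift.{1} μ := by
    intro α hα
    have h2 : Order.succ α < (Order.succ μ).ord :=
      (isSuccLimit_ord (hμ.trans (Order.le_succ μ))).succ_lt hα
    rw [← Order.Iio_succ, hIio, lift_le]
    exact Order.lt_succ_iff.1 (Cardinal.lt_ord.1 h2)
  have hg : ∀ α : Ordinal.{0}, ∃ g : Set.Iio μ.ord → Prop, α < (Order.succ μ).ord →
      ∀ T : Set (Set.Iio μ.ord), Cardinal.lift.{1} μ ≤ #T → (e T).1 ≤ α →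
        (∃ x ∈ T, g x) ∧ (∃ x ∈ T, ¬ g x) := by
    intro α
    by_cases hα : α < (Order.succ μ).ord
    · obtain ⟨g, hg⟩ := polarized_split
        (I := {T : Set (Set.Iio μ.ord) // Cardinal.lift.{1} μ ≤ #T ∧ (e T).1 ≤ α})
        (fun T => T.1) (Cardinal.lift.{1} μ) (by simpa using hμ)
        (by
          refine le_trans ?_ (hsmall α hα)
          refine mk_le_of_injective (f := fun T => ⟨(e T.1).1, T.2.2⟩) ?_
          intro a b hab
          have h3 : (e a.1).1 = (e b.1).1 := Subtype.mk.inj hab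
          exact Subtype.ext (e.injective (Subtype.ext h3)))
        (fun T => T.2.1)
      exact ⟨g, fun _ T h1 h2 => hg ⟨T, h1, h2⟩⟩
    · exact ⟨fun _ => True, fun h => absurd h hα⟩
  choose g hg using hg
  refine ⟨fun α β => if h : β < μ.ord then (if g α ⟨β, h⟩ then 1 else 0) else 0, ?_, ?_⟩
  · intro α _ β hβ
    have h12 : (1 : Ordinal.{0}) < 2 := by exact_mod_cast Nat.one_lt_two
    have h02 : (0 : Ordinal.{0}) < 2 := zero_lt_one.trans h12
    simp only [hβ, dif_pos]
    split_ifs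
    · exact h12
    · exact h02
  · intro H₀ hH₀ hc₀ H₁ hH₁ hc₁
    let T : Set (Set.Iio μ.ord) := {x | x.1 ∈ H₁}
    have hT : Cardinal.lift.{1} μ ≤ #T := by
      rw [← hc₁]
      refine mk_le_of_injective (f := fun x : H₁ => (⟨⟨x.1, hH₁ x.2⟩, x.2⟩ : T)) ?_
      intro a b hab
      simp only [Subtype.mk.injEq] at hab
      exact Subtype.ext hab
    have hex : ∃ α ∈ H₀, (e T).1 ≤ α := by
      by_contra! hc
      have h1 : #H₀ ≤ #(Set.Iic (e T).1) := mk_le_mk_of_subset (fun α hα => (hc α hα).le)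
      have h2 := h1.trans (hsmall _ (e T).2)
      rw [hc₀, lift_le] at h2
      exact absurd h2 (not_le.2 (Order.lt_succ μ))
    obtain ⟨α, hα, hle⟩ := hex
    obtain ⟨⟨x, hx, hgx⟩, ⟨y, hy, hgy⟩⟩ := hg α (hH₀ hα) T hT hle
    refine ⟨⟨α, hα, y.1, hy, ?_⟩, ⟨α, hα, x.1, hx, ?_⟩⟩
    · have : y.1 < μ.ord := y.2
      simp [this, hgy]
    · have : x.1 < μ.ord := x.2
      simp [this, hgx]
end

section
/- Let P be a separative partial order, Q a partial order, and τ : P → Q a complete embedding, i.e., τ is order-preserving, maps incompatible elements of P to incompatible elements of Q, and every q ∈ Q has a reduct in P (some p ∈ P such that τ(r) is compatible with q for every r ≤ p). Let λ be a cardinal and ν an infinite cardinal. If Q is (λ, <ν)-centered, then P is (λ, <ν)-centered. -/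
open Cardinal Set

universe u

/-- Two elements of a partial order are compatible if they have a common lower bound. -/
def Compat {P : Type u} [PartialOrder P] (p q : P) : Prop :=
  ∃ r, r ≤ p ∧ r ≤ q

/-- A partial order is separative if whenever `p ≰ q` there is `r ≤ p` incompatible
with `q`. -/
def Separative (P : Type u) [PartialOrder P] : Prop :=
  ∀ p q : P, ¬ p ≤ q → ∃ r ≤ p, ¬ Compat r q

/-- `τ : P → Q` is a complete embedding: it is order-preserving, preserves
incompatibility, and every `q ∈ Q` has a reduct in `P`. -/
def CompleteEmbedding {P Q : Type u} [PartialOrder P] [PartialOrder Q] (τ : P → Q) : Prop :=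
  (∀ p p' : P, p ≤ p' → τ p ≤ τ p') ∧
  (∀ p p' : P, ¬ Compat p p' → ¬ Compat (τ p) (τ p')) ∧
  (∀ q : Q, ∃ p : P, ∀ r ≤ p, Compat (τ r) q)

/-- `P` is `(λ, <ν)`-centered: `P` is the union of `λ` many subsets each of which is
`<ν`-centered (every subset of size `< ν` has a lower bound in `P`). -/
def IsCentered (P : Type u) [PartialOrder P] (lam ν : Cardinal.{u}) : Prop :=
  ∃ C : Ordinal.{u} → Set P,
    (∀ p : P, ∃ i < lam.ord, p ∈ C i) ∧
    ∀ i < lam.ord, ∀ Z ⊆ C i, #Z < ν → ∃ b : P, ∀ z ∈ Z, b ≤ z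

/-- If there is a complete embedding of a separative partial order `P` into `Q` and `Q`
is `(λ, <ν)`-centered, then so is `P`. -/
theorem centered_of_completeEmbedding
    {P Q : Type u} [PartialOrder P] [PartialOrder Q]
    (hP : Separative P) (τ : P → Q) (hτ : CompleteEmbedding τ)
    (lam ν : Cardinal.{u}) (hν : ℵ₀ ≤ ν)
    (hQ : IsCentered Q lam ν) : IsCentered P lam ν := by
  obtain ⟨_, hinc, hred⟩ := hτ
  obtain ⟨C, hcov, hcen⟩ := hQ
  refine ⟨fun i => τ ⁻¹' C i, fun p => hcov (τ p), ?_⟩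
  intro i hi Z hZ hcard
  obtain ⟨b, hb⟩ := hcen i hi (τ '' Z) (Set.image_subset_iff.mpr hZ)
    (lt_of_le_of_lt Cardinal.mk_image_le hcard)
  obtain ⟨p, hp⟩ := hred b
  refine ⟨p, fun z hz => ?_⟩
  by_contra hpz
  obtain ⟨r, hr, hrz⟩ := hP p z hpz
  obtain ⟨s, hs1, hs2⟩ := hp r hr
  exact hinc r z hrz ⟨s, hs1, hs2.trans (hb (τ z) ⟨z, hz, rfl⟩)⟩
end

section
/- Let P be a separative partial order, Q a partial order, and τ : P → Q a complete embedding, i.e., τ is order-preserving, maps incompatible elements of P to incompatible elements of Q, and every q ∈ Q has a reduct in P (some p ∈ P such that τ(r) is compatible with q for every r ≤ p). Let λ be a cardinal and ν an infinite cardinal. If Q has the (λ, λ, <ν)-chain condition, then P has the (λ, λ, <ν)-chain condition. -/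
open Cardinal Set

universe u

/-- `P` has the `(λ, κ, <ν)`-chain condition: every `X ⊆ P` of size `λ` has a subset `Y`
of size `κ` such that every `Z ⊆ Y` of size `< ν` has a lower bound in `P`. -/
def ChainCondition (P : Type u) [PartialOrder P] (lam κ ν : Cardinal.{u}) : Prop :=
  ∀ X : Set P, #X = lam → ∃ Y ⊆ X, #Y = κ ∧
    ∀ Z ⊆ Y, #Z < ν → ∃ b : P, ∀ z ∈ Z, b ≤ z

/-- If there is a complete embedding of a separative partial order `P` into `Q` and `Q`
has the `(λ, λ, <ν)`-chain condition, then so does `P`. -/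
theorem chainCondition_of_completeEmbedding
    {P Q : Type u} [PartialOrder P] [PartialOrder Q]
    (hP : Separative P) (τ : P → Q) (hτ : CompleteEmbedding τ)
    (lam ν : Cardinal.{u}) (hν : ℵ₀ ≤ ν)
    (hQ : ChainCondition Q lam lam ν) : ChainCondition P lam lam ν := by
  obtain ⟨hmono, hinc, hred⟩ := hτ
  have key : ∀ p q : P, τ p ≤ τ q → p ≤ q := by
    intro p q h
    by_contra hpq
    obtain ⟨r, hr, hrq⟩ := hP p q hpq
    exact hinc r q hrq ⟨τ r, le_rfl, (hmono r p hr).trans h⟩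
  have hinj : Function.Injective τ := fun p q h =>
    le_antisymm (key p q h.le) (key q p h.ge)
  intro X hX
  obtain ⟨Y, hYX, hY, hlb⟩ := hQ (τ '' X) ((mk_image_eq hinj).trans hX)
  obtain ⟨Y', hY'X, rfl⟩ := Set.subset_image_iff.1 hYX
  refine ⟨Y', hY'X, (mk_image_eq hinj).symm.trans hY, ?_⟩
  intro Z hZ hZν
  obtain ⟨q, hq⟩ := hlb (τ '' Z) (Set.image_mono hZ) (by rwa [mk_image_eq hinj])
  obtain ⟨p, hp⟩ := hred q
  refine ⟨p, fun z hz => ?_⟩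
  by_contra hpz
  obtain ⟨r, hr, hrz⟩ := hP p z hpz
  obtain ⟨s, hs, hsq⟩ := hp r hr
  exact hinc r z hrz ⟨s, hs, hsq.trans (hq _ (Set.mem_image_of_mem τ hz))⟩
end

section
/- Let P be a well-met partial order, i.e., every nonempty subset of P that has a lower bound in P has a greatest lower bound in P. Let λ be a cardinal and ν a regular infinite cardinal. Then P is (λ, <ν)-centered if and only if P can be covered by λ many <ν-complete filters, i.e., P is the union of at most λ many subsets each of which is a <ν-complete filter on P. -/
open Cardinal Set

universe u

/-- A partial order is well-met if every nonempty subset having a lower bound has a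
greatest lower bound. -/
def WellMet (P : Type u) [PartialOrder P] : Prop :=
  ∀ S : Set P, S.Nonempty → (∃ b : P, ∀ s ∈ S, b ≤ s) → ∃ g : P, IsGLB S g

/-- For a well-met partial order `P` and regular `ν`, `P` is `(λ, <ν)`-centered (the union
of `λ` many `<ν`-centered subsets) if and only if `P` can be covered by at most `λ` many
`<ν`-complete filters. -/
theorem centered_iff_covered_by_complete_filters
    {P : Type u} [PartialOrder P] (hwm : WellMet P)
    (lam ν : Cardinal.{u}) (hν : ν.IsRegular) :
    (∃ C : Ordinal.{u} → Set P,
      (∀ p : P, ∃ i < lam.ord, p ∈ C i) ∧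
      ∀ i < lam.ord, ∀ Z ⊆ C i, Z.Nonempty → #Z < ν → ∃ b : P, ∀ z ∈ Z, b ≤ z) ↔
    (∃ 𝔽 : Set (Set P), #𝔽 ≤ lam ∧
      (∀ p : P, ∃ F ∈ 𝔽, p ∈ F) ∧
      ∀ F ∈ 𝔽,
        -- `F` is a filter: nonempty, upward closed, downward directed
        F.Nonempty ∧
        (∀ p ∈ F, ∀ q : P, p ≤ q → q ∈ F) ∧
        (∀ p ∈ F, ∀ q ∈ F, ∃ r ∈ F, r ≤ p ∧ r ≤ q) ∧
        -- `F` is `<ν`-complete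
        (∀ Z ⊆ F, Z.Nonempty → #Z < ν → ∃ b ∈ F, ∀ z ∈ Z, b ≤ z)) := by
  constructor
  · rintro ⟨C, hcov, hC⟩
    let F : Ordinal.{u} → Set P := fun i =>
      {q | ∃ Z ⊆ C i, Z.Nonempty ∧ #Z < ν ∧ ∃ g, IsGLB Z g ∧ g ≤ q}
    have hsub : ∀ i, ∀ p ∈ C i, p ∈ F i := by
      intro i p hp
      refine ⟨{p}, by simpa using hp, by simp, ?_, p, isGLB_singleton, le_rfl⟩
      rw [mk_singleton]
      exact one_lt_aleph0.trans_le hν.aleph0_le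
    have hcomp : ∀ i < lam.ord, ∀ Z ⊆ F i, Z.Nonempty → #Z < ν →
        ∃ b ∈ F i, ∀ z ∈ Z, b ≤ z := by
      intro i hi Z hZ hne hcard
      have hZ' : ∀ z : Z, ∃ W ⊆ C i, W.Nonempty ∧ #W < ν ∧ ∃ g, IsGLB W g ∧ g ≤ z :=
        fun z => hZ z.2
      choose W hW hWne hWc g hg hgz using hZ'
      have hUs : (⋃ z, W z) ⊆ C i := iUnion_subset hW
      have hUne : (⋃ z, W z).Nonempty := by
        obtain ⟨z, hz⟩ := hne
        exact (hWne ⟨z, hz⟩).mono (subset_iUnion W ⟨z, hz⟩)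
      have hUc : #(⋃ z, W z : Set P) < ν :=
        (card_iUnion_lt_iff_forall_of_isRegular hν hcard).2 hWc
      obtain ⟨b, hb⟩ := hwm _ hUne (hC i hi _ hUs hUne hUc)
      refine ⟨b, ⟨_, hUs, hUne, hUc, b, hb, le_rfl⟩, ?_⟩
      intro z hz
      exact ((hg ⟨z, hz⟩).2 fun w hw => hb.1 (mem_iUnion.2 ⟨⟨z, hz⟩, hw⟩)).trans (hgz ⟨z, hz⟩)
    refine ⟨F '' {i | i < lam.ord ∧ (C i).Nonempty}, ?_, ?_, ?_⟩
    · have h1 := mk_image_le_lift (f := F) (s := {i | i < lam.ord ∧ (C i).Nonempty})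
      have h2 : #{i | i < lam.ord ∧ (C i).Nonempty} ≤ #(Iio lam.ord) :=
        mk_le_mk_of_subset fun i hi => hi.1
      rw [mk_Iio_ordinal, card_ord] at h2
      have h3 := h1.trans (lift_le.2 h2)
      simpa using h3
    · intro p
      obtain ⟨i, hi, hp⟩ := hcov p
      exact ⟨F i, ⟨i, ⟨hi, p, hp⟩, rfl⟩, hsub i p hp⟩
    · rintro _ ⟨i, ⟨hi, p, hp⟩, rfl⟩
      refine ⟨⟨p, hsub i p hp⟩, ?_, ?_, hcomp i hi⟩
      · rintro p ⟨Z, h1, h2, h3, g, h4, h5⟩ q hq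
        exact ⟨Z, h1, h2, h3, g, h4, h5.trans hq⟩
      · intro p hp q hq
        obtain ⟨b, hb, h⟩ := hcomp i hi {p, q} (by rintro x (rfl | rfl) <;> assumption) (by simp)
          (((Set.toFinite {p, q}).lt_aleph0).trans_le hν.aleph0_le)
        exact ⟨b, hb, h p (by simp), h q (by simp)⟩
  · rintro ⟨𝔽, hcard, hcov, hF⟩
    have h : lift.{u+1} #𝔽 ≤ lift.{u} #(Iio lam.ord) := by
      rw [mk_Iio_ordinal, card_ord]
      simpa using hcard
    obtain ⟨e⟩ := lift_mk_le'.1 h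
    refine ⟨fun i => {p | ∃ F : 𝔽, (e F : Ordinal) = i ∧ p ∈ F.1}, ?_, ?_⟩
    · intro p
      obtain ⟨F, hF, hp⟩ := hcov p
      exact ⟨e ⟨F, hF⟩, (e ⟨F, hF⟩).2, ⟨F, hF⟩, rfl, hp⟩
    · intro i hi Z hZ hne hc
      obtain ⟨z, hz⟩ := hne
      obtain ⟨F, hFi, -⟩ := hZ hz
      obtain ⟨b, -, hb⟩ := (hF F.1 F.2).2.2.2 Z (by
        intro w hw
        obtain ⟨G, hG, hwG⟩ := hZ hw
        have : G = F := e.injective (Subtype.ext (hG.trans hFi.symm))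
        exact this ▸ hwG) ⟨z, hz⟩ hc
      exact ⟨b, hb⟩
end
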